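/- Let ξ follow a Gaussian mixture model ∑_{j=1}^K π_j 𝒩(μ_j, Σ_j) with each Σ_j positive definite and f(x) ≠ 0 on X. Then the chance-constrained program minimize_{x∈X} h(x) subject to Pr_{ξ∼P*}{f_0(x) + f(x)^⊤ξ ≤ 0} ≥ 1−α has the same optimal value as the lifted deterministic program minimize_{x∈X, y∈[0,1]^K} h(x) subject to Φ^{-1}(y_j)√(f(x)^⊤Σ_j f(x)) + f_0(x) + f(x)^⊤μ_j ≤ 0 for j = 1,…,K and ∑_{j=1}^K π_j y_j ≥ 1−α; moreover x is feasible for the chance-constrained program if and only if there exists y ∈ [0,1]^K making (x,y) feasible for the lifted program. -/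

import Mathlib

open MeasureTheory ProbabilityTheory Filter Set Matrix
open scoped ENNReal NNReal

/-- Density of the multivariate normal distribution `𝒩(μ, Σ)` on `ℝ^k`. -/
noncomputable def gaussianPdf {k : ℕ} (μ : Fin k → ℝ) (Sig : Matrix (Fin k) (Fin k) ℝ)
    (z : Fin k → ℝ) : ℝ :=
  (Real.sqrt ((2 * Real.pi) ^ k * Sig.det))⁻¹ *
    Real.exp (-(1 / 2) * ((z - μ) ⬝ᵥ Sig⁻¹.mulVec (z - μ)))

/-- The standard normal cumulative distribution function `Φ`. -/
noncomputable def stdNormalCDF (s : ℝ) : ℝ := cdf (gaussianReal 0 1) s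

/-- The standard normal quantile function `Φ⁻¹`, valued in the extended reals (so
that `Φ⁻¹(0) = -∞` and `Φ⁻¹(1) = +∞`). -/
noncomputable def stdNormalInvCDF (p : ℝ) : EReal :=
  sInf ((fun s : ℝ => (s : EReal)) '' {s | p ≤ stdNormalCDF s})

/-!
An affine image `μ + A w` of a standard Gaussian vector `w` has density `gaussianPdf μ (A Aᵀ)`, so
taking `A = √Σ` identifies `gaussianPdf μ Σ` as the density of the Gaussian measure with mean `μ`
and covariance `Σ`. Under that measure `cᵀξ` is a real Gaussian variable with mean `cᵀμ` and
variance `cᵀΣc`, which turns each component probability into a value of `Φ`, and the chance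
constraint into a lower bound on a weighted sum of such values. Because `Φ⁻¹(y) ≤ s ↔ y ≤ Φ(s)`,
the lifted constraints say exactly that `y j` is at most the `j`-th component probability; as the
weights are nonnegative, the best choice is equality.
-/

section Quantile

lemma stdNormalCDF_mem_Icc (s : ℝ) : stdNormalCDF s ∈ Icc (0 : ℝ) 1 :=
  ⟨cdf_nonneg _ s, cdf_le_one _ s⟩

lemma stdNormalInvCDF_le_coe_iff {p s : ℝ} :
    stdNormalInvCDF p ≤ (s : EReal) ↔ p ≤ stdNormalCDF s := by
  refine ⟨fun h ↦ ?_, fun h ↦ sInf_le ⟨s, h, rfl⟩⟩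
  have right_cont : Tendsto stdNormalCDF (nhdsWithin s (Ioi s)) (nhds (stdNormalCDF s)) :=
    ((cdf (gaussianReal 0 1)).right_continuous s).mono Ioi_subset_Ici_self
  refine ge_of_tendsto right_cont ?_
  filter_upwards [self_mem_nhdsWithin] with t hst
  obtain ⟨_, ⟨r, hr, rfl⟩, hrt⟩ := sInf_lt_iff.1 (h.trans_lt (EReal.coe_lt_coe_iff.2 hst))
  exact hr.trans (monotone_cdf _ (EReal.coe_lt_coe_iff.1 hrt).le)

lemma mul_coe_add_coe_nonpos_iff {q : EReal} {σ b : ℝ} (hσ : 0 < σ) :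
    q * (σ : EReal) + (b : EReal) ≤ 0 ↔ q ≤ ((-b / σ : ℝ) : EReal) := by
  rw [EReal.coe_div, EReal.le_div_iff_mul_le (EReal.coe_pos.2 hσ) (EReal.coe_ne_top σ),
    ← EReal.le_sub_iff_add_le (.inl (EReal.coe_ne_bot b)) (.inl (EReal.coe_ne_top b)), zero_sub,
    EReal.coe_neg]

lemma stdNormalInvCDF_mul_add_nonpos_iff {y σ b : ℝ} (hσ : 0 < σ) :
    stdNormalInvCDF y * (σ : EReal) + (b : EReal) ≤ 0 ↔ y ≤ stdNormalCDF (-b / σ) :=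
  (mul_coe_add_coe_nonpos_iff hσ).trans stdNormalInvCDF_le_coe_iff

end Quantile

section Density

lemma map_withDensity_comp {α β : Type*} [MeasurableSpace α] [MeasurableSpace β] (ν : Measure α)
    {φ : α → β} (hφ : Measurable φ) {g : β → ℝ≥0∞} (hg : Measurable g) :
    (ν.withDensity (g ∘ φ)).map φ = (ν.map φ).withDensity g := by
  ext s hs
  rw [Measure.map_apply hφ hs, withDensity_apply _ (hφ hs), withDensity_apply _ hs,
    setLIntegral_map hs hg hφ]
  rfl

lemma withDensity_finsetSum {ι α : Type*} [MeasurableSpace α] (ν : Measure α) (s : Finset ι)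
    {g : ι → α → ℝ≥0∞} (hg : ∀ i ∈ s, Measurable (g i)) :
    ν.withDensity (fun x ↦ ∑ i ∈ s, g i x) = ∑ i ∈ s, ν.withDensity (g i) := by
  ext t ht
  simp only [withDensity_apply _ ht, Measure.finsetSum_apply, lintegral_finsetSum s hg]

lemma pi_withDensity_ofReal {ι : Type*} [Fintype ι] {α : ι → Type*} [∀ i, MeasurableSpace (α i)]
    (ν : ∀ i, Measure (α i)) [∀ i, SigmaFinite (ν i)] {g : ∀ i, α i → ℝ}
    (hg : ∀ i, Integrable (g i) (ν i)) (hg_nonneg : ∀ i x, 0 ≤ g i x) :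
    Measure.pi (fun i ↦ (ν i).withDensity fun x ↦ ENNReal.ofReal (g i x)) =
      (Measure.pi ν).withDensity fun x ↦ ENNReal.ofReal (∏ i, g i (x i)) := by
  have : ∀ i, IsFiniteMeasure ((ν i).withDensity fun x ↦ ENNReal.ofReal (g i x)) :=
    fun i ↦ isFiniteMeasure_withDensity_ofReal (hg i).2
  refine Measure.pi_eq fun s hs ↦ ?_
  have prod_integrable : Integrable (fun x : ∀ i, α i ↦ ∏ i, g i (x i))
      (Measure.pi fun i ↦ (ν i).restrict (s i)) :=
    Integrable.fintype_prod_dep fun i ↦ (hg i).restrict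
  rw [withDensity_apply _ (MeasurableSet.univ_pi hs), Measure.restrict_pi_pi,
    ← ofReal_integral_eq_lintegral_ofReal prod_integrable
      (ae_of_all _ fun x ↦ Finset.prod_nonneg fun i _ ↦ hg_nonneg i _),
    integral_fintype_prod_eq_prod,
    ENNReal.ofReal_prod_of_nonneg fun i _ ↦ integral_nonneg (hg_nonneg i)]
  refine Finset.prod_congr rfl fun i _ ↦ ?_
  rw [withDensity_apply _ (hs i),
    ofReal_integral_eq_lintegral_ofReal (hg i).restrict (ae_of_all _ (hg_nonneg i))]

lemma map_const_add_mulVec_volume {ι : Type*} [Fintype ι] [DecidableEq ι] {A : Matrix ι ι ℝ}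
    (hA : A.det ≠ 0) (b : ι → ℝ) :
    (volume : Measure (ι → ℝ)).map (fun w ↦ b + A *ᵥ w) =
      ENNReal.ofReal |A.det⁻¹| • (volume : Measure (ι → ℝ)) := by
  calc (volume : Measure (ι → ℝ)).map (fun w ↦ b + A *ᵥ w)
    _ = ((volume : Measure (ι → ℝ)).map (toLin' A)).map (b + ·) := by
      rw [Measure.map_map (by fun_prop) (LinearMap.continuous_of_finiteDimensional _).measurable]
      rfl
    _ = ENNReal.ofReal |A.det⁻¹| • (volume : Measure (ι → ℝ)) := by
      rw [Real.map_matrix_volume_pi_eq_smul_volume_pi hA, Measure.map_smul,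
        map_add_left_eq_self]

end Density

section GaussianPdf

variable {k : ℕ}

lemma gaussianPdf_nonneg (μ : Fin k → ℝ) (S : Matrix (Fin k) (Fin k) ℝ) (z : Fin k → ℝ) :
    0 ≤ gaussianPdf μ S z := by
  unfold gaussianPdf
  positivity

lemma measurable_gaussianPdf (μ : Fin k → ℝ) (S : Matrix (Fin k) (Fin k) ℝ) :
    Measurable (gaussianPdf μ S) := by
  have : Continuous (gaussianPdf μ S) := by
    unfold gaussianPdf
    fun_prop
  exact this.measurable

lemma gaussianPdf_zero_one (w : Fin k → ℝ) :
    gaussianPdf 0 1 w = ∏ i, gaussianPDFReal 0 1 (w i) := by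
  have sqrt_pow : √((2 * Real.pi) ^ k) = √(2 * Real.pi) ^ k := by
    rw [Real.sqrt_eq_iff_mul_self_eq (by positivity) (by positivity), ← mul_pow,
      Real.mul_self_sqrt (by positivity)]
  simp only [gaussianPdf, gaussianPDFReal, det_one, mul_one, sub_zero, inv_one, one_mulVec,
    NNReal.coe_one, Finset.prod_mul_distrib, Finset.prod_const, Finset.card_univ,
    Fintype.card_fin, ← Real.exp_sum, sqrt_pow, inv_pow]
  congr 2
  rw [dotProduct, Finset.mul_sum]
  exact Finset.sum_congr rfl fun i _ ↦ by ring

lemma pi_gaussianReal_eq_withDensity :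
    Measure.pi (fun _ : Fin k ↦ gaussianReal 0 1) =
      volume.withDensity fun w ↦ ENNReal.ofReal (gaussianPdf 0 1 w) := by
  simp only [gaussianPdf_zero_one, gaussianReal_of_var_ne_zero 0 one_ne_zero]
  exact pi_withDensity_ofReal (fun _ ↦ volume) (fun _ ↦ integrable_gaussianPDFReal 0 1)
    fun _ ↦ gaussianPDFReal_nonneg 0 1

lemma dotProduct_mul_transpose_inv_mulVec {ι R : Type*} [Fintype ι] [DecidableEq ι] [CommRing R]
    {A : Matrix ι ι R} (hA : IsUnit A.det) (w : ι → R) :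
    (A *ᵥ w) ⬝ᵥ (A * Aᵀ)⁻¹ *ᵥ (A *ᵥ w) = w ⬝ᵥ w := by
  rw [Matrix.mul_inv_rev, mulVec_mulVec, Matrix.mul_assoc, nonsing_inv_mul _ hA, Matrix.mul_one,
    ← transpose_nonsing_inv, mulVec_transpose, dotProduct_comm, ← dotProduct_mulVec,
    mulVec_mulVec, nonsing_inv_mul _ hA, one_mulVec]

lemma abs_det_mul_gaussianPdf_mul_transpose {A : Matrix (Fin k) (Fin k) ℝ} (hA : A.det ≠ 0)
    (μ w : Fin k → ℝ) :
    |A.det| * gaussianPdf μ (A * Aᵀ) (μ + A *ᵥ w) = gaussianPdf 0 1 w := by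
  have abs_det_ne_zero : |A.det| ≠ 0 := abs_ne_zero.2 hA
  have sqrt_det : √((2 * Real.pi) ^ k * (A * Aᵀ).det) = √((2 * Real.pi) ^ k) * |A.det| := by
    rw [det_mul, det_transpose, Real.sqrt_mul (by positivity), Real.sqrt_mul_self_eq_abs]
  simp only [gaussianPdf, sqrt_det, add_sub_cancel_left,
    dotProduct_mul_transpose_inv_mulVec (isUnit_iff_ne_zero.2 hA), det_one, mul_one, sub_zero,
    inv_one, one_mulVec]
  field_simp

lemma map_const_add_mulVec_pi_gaussianReal {A : Matrix (Fin k) (Fin k) ℝ} (hA : A.det ≠ 0)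
    (μ : Fin k → ℝ) :
    (Measure.pi fun _ : Fin k ↦ gaussianReal 0 1).map (fun w ↦ μ + A *ᵥ w) =
      volume.withDensity fun z ↦ ENNReal.ofReal (gaussianPdf μ (A * Aᵀ) z) := by
  have density_factor : (fun w ↦ ENNReal.ofReal (gaussianPdf 0 1 w)) = ENNReal.ofReal |A.det| •
      ((fun z ↦ ENNReal.ofReal (gaussianPdf μ (A * Aᵀ) z)) ∘ fun w ↦ μ + A *ᵥ w) := by
    ext w
    rw [← abs_det_mul_gaussianPdf_mul_transpose hA μ w, ENNReal.ofReal_mul (abs_nonneg _)]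
    rfl
  have jacobian_cancel : ENNReal.ofReal |A.det| * ENNReal.ofReal |A.det⁻¹| = 1 := by
    rw [← ENNReal.ofReal_mul (abs_nonneg _), ← abs_mul, mul_inv_cancel₀ hA, abs_one,
      ENNReal.ofReal_one]
  have affine_measurable : Measurable fun w : Fin k → ℝ ↦ μ + A *ᵥ w :=
    Continuous.measurable (by fun_prop)
  rw [pi_gaussianReal_eq_withDensity, density_factor,
    withDensity_smul' _ _ ENNReal.ofReal_ne_top, Measure.map_smul,
    map_withDensity_comp _ affine_measurable (measurable_gaussianPdf _ _).ennreal_ofReal,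
    map_const_add_mulVec_volume hA, withDensity_smul_measure, smul_smul, jacobian_cancel, one_smul]

open scoped MatrixOrder in
lemma map_ofLp_multivariateGaussian {S : Matrix (Fin k) (Fin k) ℝ} (hS : S.PosDef)
    (μ : Fin k → ℝ) :
    (multivariateGaussian (WithLp.toLp 2 μ) S).map WithLp.ofLp =
      volume.withDensity fun z ↦ ENNReal.ofReal (gaussianPdf μ S z) := by
  have sqrt_symm : (CFC.sqrt S)ᵀ = CFC.sqrt S := by
    simpa using (CFC.sqrt_nonneg S).posSemidef.isHermitian.eq
  have sqrt_mul_transpose : CFC.sqrt S * (CFC.sqrt S)ᵀ = S := by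
    rw [sqrt_symm, CFC.sqrt_mul_sqrt_self S hS.posSemidef.nonneg]
  have det_sqrt_ne_zero : (CFC.sqrt S).det ≠ 0 := by
    intro h
    have := hS.det_pos.ne'
    rw [← sqrt_mul_transpose, det_mul, h, zero_mul] at this
    exact this rfl
  rw [multivariateGaussian, ← map_pi_eq_stdGaussian, Measure.map_map (by fun_prop) (by fun_prop),
    Measure.map_map (by fun_prop) (by fun_prop)]
  exact (map_const_add_mulVec_pi_gaussianReal det_sqrt_ne_zero μ).trans
    (by rw [sqrt_mul_transpose])

end GaussianPdf

section Projection

lemma map_inner_multivariateGaussian {ι : Type*} [Fintype ι] [DecidableEq ι]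
    (μ : EuclideanSpace ℝ ι) {S : Matrix ι ι ℝ} (hS : S.PosSemidef) (c : EuclideanSpace ℝ ι) :
    (multivariateGaussian μ S).map (inner ℝ c) =
      gaussianReal (inner ℝ c μ) (c ⬝ᵥ S *ᵥ c).toNNReal := by
  have mean : ∫ x, innerSL ℝ c x ∂(multivariateGaussian μ S) = inner ℝ c μ := by
    rw [ContinuousLinearMap.integral_comp_id_comm IsGaussian.integrable_id,
      integral_id_multivariateGaussian, innerSL_apply_apply]
  have variance : Var[innerSL ℝ c; multivariateGaussian μ S] = c ⬝ᵥ S *ᵥ c := by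
    rw [← covarianceBilin_multivariateGaussian (μ := μ) hS,
      covarianceBilin_self IsGaussian.memLp_two_id]
    rfl
  rw [← mean, ← variance]
  exact IsGaussian.map_eq_gaussianReal (innerSL ℝ c)

lemma cdf_gaussianReal (m : ℝ) {v : ℝ≥0} (hv : v ≠ 0) (t : ℝ) :
    cdf (gaussianReal m v) t = stdNormalCDF ((t - m) / √v) := by
  have sqrt_pos : 0 < √(v : ℝ) := Real.sqrt_pos.2 (NNReal.coe_pos.2 (pos_iff_ne_zero.2 hv))
  have standardize : gaussianReal m v = (gaussianReal 0 1).map fun s ↦ m + √v * s := by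
    rw [← Function.comp_def (m + ·) (√(v : ℝ) * ·),
      ← Measure.map_map (by fun_prop) (by fun_prop), gaussianReal_map_const_mul,
      gaussianReal_map_const_add]
    congr 1
    · simp
    · ext
      simp
  rw [stdNormalCDF, cdf_eq_real, cdf_eq_real, standardize,
    map_measureReal_apply (by fun_prop) measurableSet_Iic]
  congr 1
  ext s
  simp only [mem_preimage, mem_Iic]
  rw [le_div_iff₀ sqrt_pos, le_sub_iff_add_le', mul_comm]

lemma dotProduct_mulVec_pos_of_posDef {ι : Type*} [Fintype ι] {S : Matrix ι ι ℝ} (hS : S.PosDef)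
    {c : ι → ℝ} (hc : c ≠ 0) : 0 < c ⬝ᵥ S *ᵥ c := by
  simpa only [star_trivial] using hS.dotProduct_mulVec_pos hc

lemma measurableSet_halfspace {ι : Type*} [Fintype ι] (c : ι → ℝ) (c0 : ℝ) :
    MeasurableSet {z : ι → ℝ | c0 + c ⬝ᵥ z ≤ 0} :=
  (isClosed_le (by fun_prop) continuous_const).measurableSet

lemma withDensity_gaussianPdf_halfspace {k : ℕ} (μ : Fin k → ℝ) {S : Matrix (Fin k) (Fin k) ℝ}
    (hS : S.PosDef) {c : Fin k → ℝ} (hc : c ≠ 0) (c0 : ℝ) :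
    volume.withDensity (fun z ↦ ENNReal.ofReal (gaussianPdf μ S z)) {z | c0 + c ⬝ᵥ z ≤ 0} =
      ENNReal.ofReal (stdNormalCDF (-(c0 + c ⬝ᵥ μ) / √(c ⬝ᵥ S *ᵥ c))) := by
  have var_pos : 0 < c ⬝ᵥ S *ᵥ c := dotProduct_mulVec_pos_of_posDef hS hc
  have inner_toLp : ∀ x : EuclideanSpace ℝ (Fin k),
      inner ℝ (WithLp.toLp 2 c) x = c ⬝ᵥ x.ofLp := fun x ↦ by
    simp [EuclideanSpace.inner_eq_star_dotProduct, dotProduct_comm]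
  have halfspace_preimage :
      (WithLp.ofLp : EuclideanSpace ℝ (Fin k) → Fin k → ℝ) ⁻¹' {z | c0 + c ⬝ᵥ z ≤ 0} =
        inner ℝ (WithLp.toLp 2 c) ⁻¹' Iic (-c0) := by
    ext x
    simp only [mem_preimage, mem_ofPred_eq, mem_Iic, inner_toLp, le_neg_iff_add_nonpos_left]
  rw [← map_ofLp_multivariateGaussian hS,
    Measure.map_apply (by fun_prop) (measurableSet_halfspace c c0), halfspace_preimage,
    ← Measure.map_apply (by fun_prop) measurableSet_Iic,
    map_inner_multivariateGaussian _ hS.posSemidef, ← ofReal_cdf,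
    cdf_gaussianReal _ (Real.toNNReal_pos.2 var_pos).ne', inner_toLp,
    Real.coe_toNNReal _ var_pos.le, neg_add']

end Projection

section Mixture

variable {ι : Type*} [Fintype ι] {k : ℕ}

/-- The Gaussian mixture `∑ j, π j • 𝒩(μs j, Sigs j)` on `ℝ^k`, given by its density. It is a
probability measure only when the weights sum to one; negative density values are truncated
to `0`. -/
noncomputable def gaussianMixture (π : ι → ℝ) (μs : ι → Fin k → ℝ)
    (Sigs : ι → Matrix (Fin k) (Fin k) ℝ) : Measure (Fin k → ℝ) :=
  volume.withDensity fun z ↦ ENNReal.ofReal (∑ j, π j * gaussianPdf (μs j) (Sigs j) z)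

lemma gaussianMixture_eq_sum {π : ι → ℝ} (hπ : ∀ j, 0 ≤ π j) (μs : ι → Fin k → ℝ)
    (Sigs : ι → Matrix (Fin k) (Fin k) ℝ) :
    gaussianMixture π μs Sigs = ∑ j, ENNReal.ofReal (π j) •
      volume.withDensity fun z ↦ ENNReal.ofReal (gaussianPdf (μs j) (Sigs j) z) := by
  have density_meas (j : ι) : Measurable fun z ↦ ENNReal.ofReal (gaussianPdf (μs j) (Sigs j) z) :=
    (measurable_gaussianPdf _ _).ennreal_ofReal
  simp only [gaussianMixture, ← withDensity_smul _ (density_meas _)]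
  rw [← withDensity_finsetSum _ _ fun j _ ↦ (density_meas j).const_smul _]
  congr 1 with z
  rw [ENNReal.ofReal_sum_of_nonneg fun j _ ↦ mul_nonneg (hπ j) (gaussianPdf_nonneg _ _ _)]
  exact Finset.sum_congr rfl fun j _ ↦ ENNReal.ofReal_mul (hπ j)

lemma toReal_gaussianMixture_halfspace {π : ι → ℝ} (hπ : ∀ j, 0 ≤ π j) (μs : ι → Fin k → ℝ)
    {Sigs : ι → Matrix (Fin k) (Fin k) ℝ} (hSigs : ∀ j, (Sigs j).PosDef) {c : Fin k → ℝ}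
    (hc : c ≠ 0) (c0 : ℝ) :
    (gaussianMixture π μs Sigs {z | c0 + c ⬝ᵥ z ≤ 0}).toReal =
      ∑ j, π j * stdNormalCDF (-(c0 + c ⬝ᵥ μs j) / √(c ⬝ᵥ Sigs j *ᵥ c)) := by
  simp only [gaussianMixture_eq_sum hπ, Measure.finsetSum_apply, Measure.smul_apply, smul_eq_mul,
    withDensity_gaussianPdf_halfspace _ (hSigs _) hc]
  rw [ENNReal.toReal_sum fun j _ ↦ ENNReal.mul_ne_top ENNReal.ofReal_ne_top ENNReal.ofReal_ne_top]
  refine Finset.sum_congr rfl fun j _ ↦ ?_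
  rw [ENNReal.toReal_mul, ENNReal.toReal_ofReal (hπ j),
    ENNReal.toReal_ofReal (stdNormalCDF_mem_Icc _).1]

end Mixture

section Programs

variable {ι : Type*} [Fintype ι] {k : ℕ} {E : Type*}

/-- The feasible set of the chance-constrained program: the decisions `x ∈ X` satisfying
`Pr_{ξ∼P}{f₀(x) + f(x)ᵀξ ≤ 0} ≥ 1 - α`. -/
def chanceFeasibleSet (P : Measure (Fin k → ℝ)) (X : Set E) (f0 : E → ℝ) (f : E → Fin k → ℝ)
    (α : ℝ) : Set E :=
  {x ∈ X | 1 - α ≤ (P {z | f0 x + f x ⬝ᵥ z ≤ 0}).toReal}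

/-- The feasible set of the lifted deterministic program for a Gaussian mixture, whose points are
pairs of a decision `x` and a vector `y` of lower bounds on the component probabilities. -/
def liftedFeasibleSet (π : ι → ℝ) (μs : ι → Fin k → ℝ) (Sigs : ι → Matrix (Fin k) (Fin k) ℝ)
    (X : Set E) (f0 : E → ℝ) (f : E → Fin k → ℝ) (α : ℝ) : Set (E × (ι → ℝ)) :=
  {p | p.1 ∈ X ∧ (∀ j, p.2 j ∈ Icc (0 : ℝ) 1) ∧
    (∀ j, stdNormalInvCDF (p.2 j) * ((√(f p.1 ⬝ᵥ Sigs j *ᵥ f p.1) : ℝ) : EReal) +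
      ((f0 p.1 + f p.1 ⬝ᵥ μs j : ℝ) : EReal) ≤ (0 : EReal)) ∧
    1 - α ≤ ∑ j, π j * p.2 j}

lemma exists_mem_le_and_le_sum_mul_iff {π b : ι → ℝ} {s : Set ℝ} (hπ : ∀ j, 0 ≤ π j)
    (hb : ∀ j, b j ∈ s) {r : ℝ} :
    (∃ y : ι → ℝ, (∀ j, y j ∈ s) ∧ (∀ j, y j ≤ b j) ∧ r ≤ ∑ j, π j * y j) ↔
      r ≤ ∑ j, π j * b j := by
  refine ⟨?_, fun hr ↦ ⟨b, hb, fun _ ↦ le_rfl, hr⟩⟩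
  rintro ⟨y, -, hyb, hr⟩
  exact hr.trans (Finset.sum_le_sum fun j _ ↦ mul_le_mul_of_nonneg_left (hyb j) (hπ j))

lemma image_fst_liftedFeasibleSet {π : ι → ℝ} (hπ : ∀ j, 0 ≤ π j) (μs : ι → Fin k → ℝ)
    {Sigs : ι → Matrix (Fin k) (Fin k) ℝ} (hSigs : ∀ j, (Sigs j).PosDef) {X : Set E}
    (f0 : E → ℝ) {f : E → Fin k → ℝ} (hf : ∀ x ∈ X, f x ≠ 0) (α : ℝ) :
    Prod.fst '' liftedFeasibleSet π μs Sigs X f0 f α =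
      chanceFeasibleSet (gaussianMixture π μs Sigs) X f0 f α := by
  ext x
  simp only [liftedFeasibleSet, chanceFeasibleSet, mem_image, Prod.exists, mem_ofPred_eq,
    exists_and_right, exists_eq_right, exists_and_left]
  refine and_congr_right fun hx ↦ ?_
  have std_pos (j : ι) : 0 < √(f x ⬝ᵥ Sigs j *ᵥ f x) :=
    Real.sqrt_pos.2 (dotProduct_mulVec_pos_of_posDef (hSigs j) (hf x hx))
  simp only [stdNormalInvCDF_mul_add_nonpos_iff (std_pos _),
    toReal_gaussianMixture_halfspace hπ μs hSigs (hf x hx)]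
  exact exists_mem_le_and_le_sum_mul_iff hπ fun j ↦ stdNormalCDF_mem_Icc _

theorem gmm_ccp_lifted_reformulation_general {β : Type*} [InfSet β] {π : ι → ℝ}
    (hπ : ∀ j, 0 ≤ π j) (μs : ι → Fin k → ℝ) {Sigs : ι → Matrix (Fin k) (Fin k) ℝ}
    (hSigs : ∀ j, (Sigs j).PosDef) {X : Set E} (h : E → β) (f0 : E → ℝ) {f : E → Fin k → ℝ}
    (hf : ∀ x ∈ X, f x ≠ 0) (α : ℝ) :
    (∀ x, x ∈ chanceFeasibleSet (gaussianMixture π μs Sigs) X f0 f α ↔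
      ∃ y, (x, y) ∈ liftedFeasibleSet π μs Sigs X f0 f α) ∧
    sInf (h '' chanceFeasibleSet (gaussianMixture π μs Sigs) X f0 f α) =
      sInf ((fun p ↦ h p.1) '' liftedFeasibleSet π μs Sigs X f0 f α) := by
  rw [← image_fst_liftedFeasibleSet hπ μs hSigs f0 hf α]
  exact ⟨fun x ↦ by simp, by rw [image_image]⟩

end Programs

/-- Under a Gaussian mixture model with components `𝒩(μ_j, Σ_j)`
(`Σ_j ≻ 0`) and `f(x) ≠ 0` on `X`, the chance-constrained program
`min_{x∈X} h(x) s.t. Pr_{ξ∼P*}{f₀(x) + f(x)ᵀξ ≤ 0} ≥ 1-α` has the same optimal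
value as the lifted program with auxiliary variables `y ∈ [0,1]^K` and constraints
`Φ⁻¹(y_j)√(f(x)ᵀΣ_j f(x)) + f₀(x) + f(x)ᵀμ_j ≤ 0` and `∑_j π_j y_j ≥ 1-α`;
moreover `x` is feasible for the former iff some `y` makes `(x,y)` feasible for the
latter. -/
theorem gmm_ccp_lifted_reformulation
    {k : ℕ} {K : ℕ} {E : Type*}
    (μs : Fin K → (Fin k → ℝ)) (Sigs : Fin K → Matrix (Fin k) (Fin k) ℝ)
    (hSigs : ∀ j, (Sigs j).PosDef)
    (π : Fin K → ℝ) (hπ : ∀ j, 0 ≤ π j) (hπsum : ∑ j, π j = 1)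
    (Pstar : Measure (Fin k → ℝ))
    (hPstar : Pstar = volume.withDensity
      (fun z => ENNReal.ofReal (∑ j, π j * gaussianPdf (μs j) (Sigs j) z)))
    (X : Set E) (h : E → ℝ) (f0 : E → ℝ) (f : E → (Fin k → ℝ))
    (hf : ∀ x ∈ X, f x ≠ 0)
    (α : ℝ) (hα : α ∈ Ioo (0 : ℝ) 1)
    -- the feasible set of the chance-constrained program
    (CCPFeas : Set E)
    (hCCPFeas : CCPFeas =
      {x ∈ X | 1 - α ≤ (Pstar {z | f0 x + f x ⬝ᵥ z ≤ 0}).toReal})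
    -- the feasible set of the lifted deterministic program
    (LiftFeas : Set (E × (Fin K → ℝ)))
    (hLiftFeas : LiftFeas = {p | p.1 ∈ X ∧ (∀ j, p.2 j ∈ Icc (0 : ℝ) 1) ∧
      (∀ j, stdNormalInvCDF (p.2 j) *
          ((Real.sqrt (f p.1 ⬝ᵥ (Sigs j).mulVec (f p.1)) : ℝ) : EReal) +
          ((f0 p.1 + f p.1 ⬝ᵥ μs j : ℝ) : EReal) ≤ (0 : EReal)) ∧
      1 - α ≤ ∑ j, π j * p.2 j}) :
    (∀ x ∈ X, (x ∈ CCPFeas ↔ ∃ y : Fin K → ℝ, (x, y) ∈ LiftFeas)) ∧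
    sInf (h '' CCPFeas) = sInf ((fun p : E × (Fin K → ℝ) => h p.1) '' LiftFeas) := by
  subst hPstar hCCPFeas hLiftFeas
  have := gmm_ccp_lifted_reformulation_general hπ μs hSigs h f0 hf α
  exact ⟨fun x _ ↦ this.1 x, this.2⟩
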